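/- For every L ≥ 2, the transition matrix M_L of the asymmetric annihilation process satisfies the order-one block recursion M_L = [[M_{L-1} − α(σ⊗1_{L-2}), α·1_{L-1} + (σ⊗1_{L-2})], [α·1_{L-1}, M_{L-1} − 1_{L-1} − α(σ⊗1_{L-2})]], where M_L is written as a 2×2 block matrix whose blocks have size 2^{L-1}. -/

import Mathlib

open scoped BigOperators Classical

/-- Bitvectors of length `L`, with entries in `ZMod 2`. -/
abbrev BV (L : ℕ) := Fin L → ZMod 2

/-- `phi j` flips component `j` of a bitvector. -/
def phi {L : ℕ} (j : Fin L) (b : BV L) : BV L :=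
  fun i => b i + if i = j then 1 else 0

/-- `psi j` flips components `j` and `j+1` of a bitvector (only `j` if `j` is the last index). -/
def psi {L : ℕ} (j : Fin L) (b : BV L) : BV L :=
  fun i => b i + if i = j ∨ (i : ℕ) = (j : ℕ) + 1 then 1 else 0

/-- The transition matrix of the asymmetric annihilation process on `L+1` sites
(entry `(c,b)` is the rate of the transition from `b` to `c`). -/
noncomputable def Mmat (L : ℕ) (α β : ℝ) : Matrix (BV (L+1)) (BV (L+1)) ℝ :=
  Matrix.of fun c b =>
    if c = b then
      -(α + ((Finset.univ.filter fun j : Fin (L+1) => (j : ℕ) + 1 < L + 1 ∧ b j = 1).card : ℝ)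
        + β * if b (Fin.last L) = 1 then 1 else 0)
    else
      (if c = phi 0 b then α else 0)
      + (if ∃ j : Fin (L+1), (j : ℕ) + 1 < L + 1 ∧ b j = 1 ∧ c = psi j b then 1 else 0)
      + (if b (Fin.last L) = 1 ∧ c = phi (Fin.last L) b then β else 0)

/-- Splitting a bitvector of length `L+1` according to its first (most significant) bit:
bitvectors starting with `0` come first in the binary-value order. -/
def splitEquiv (L : ℕ) : BV (L+1) ≃ (BV L ⊕ BV L) where
  toFun b := if b 0 = 0 then Sum.inl (Fin.tail b) else Sum.inr (Fin.tail b)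
  invFun s := Sum.elim (Fin.cons 0) (Fin.cons 1) s
  left_inv b := by
    by_cases h : b 0 = 0
    · simp only [if_pos h, Sum.elim_inl]
      conv_rhs => rw [← Fin.cons_self_tail b]
      rw [h]
    · have h1 : b 0 = 1 := by
        have : ∀ x : ZMod 2, x = 0 ∨ x = 1 := by decide
        rcases this (b 0) with h0 | h0
        · exact absurd h0 h
        · exact h0
      simp only [if_neg h, Sum.elim_inr]
      conv_rhs => rw [← Fin.cons_self_tail b]
      rw [h1]
  right_inv s := by
    rcases s with b | b
    · simp [Fin.cons_zero, Fin.tail_cons]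
    · simp [Fin.cons_zero, Fin.tail_cons, (by decide : ¬ (1 : ZMod 2) = 0)]

/-- The Kronecker product `σ ⊗ 1` where `σ = [[0,1],[1,0]]` and `1` is the identity
of size `2^L`: it flips the first (most significant) bit. -/
def SK (L : ℕ) : Matrix (BV (L+1)) (BV (L+1)) ℝ :=
  Matrix.of fun b c => if b = phi 0 c then 1 else 0

/-!
The rate `α` enters `M_L` only through the left boundary: `M_L = M_L|_{α = 0} + α (σ ⊗ 1 - 1)`.
At `α = 0` the first bit can only drop from `1` to `0`, and it does so by firing the first bond,
which also flips the second bit. So the `α = 0` matrix is block upper triangular, with diagonal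
blocks `M_{L-1}|_{α = 0}` and `M_{L-1}|_{α = 0} - 1` and upper right block `σ ⊗ 1`. Adding back
the left boundary terms of `M_L` and expressing `M_{L-1}|_{α = 0}` through `M_{L-1}` gives the
recursion.
-/

theorem phi_ne_self {L : ℕ} (j : Fin L) (b : BV L) : phi j b ≠ b := fun h ↦ by
  simpa [phi] using congrFun h j

section Cons

variable {L : ℕ} (x : ZMod 2)

theorem phi_zero_cons (b : BV L) :
    phi 0 (Fin.cons x b : BV (L + 1)) = Fin.cons (x + 1) b := by
  ext i
  cases i using Fin.cases <;> simp [phi]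

theorem phi_succ_cons (j : Fin L) (b : BV L) :
    phi j.succ (Fin.cons x b : BV (L + 1)) = Fin.cons x (phi j b) := by
  ext i
  cases i using Fin.cases <;> simp [phi, (Fin.succ_ne_zero j).symm]

theorem psi_zero_cons (b : BV (L + 1)) :
    psi 0 (Fin.cons x b : BV (L + 2)) = Fin.cons (x + 1) (phi 0 b) := by
  ext i
  cases i using Fin.cases <;> simp [psi, phi]

theorem psi_succ_cons (j : Fin L) (b : BV L) :
    psi j.succ (Fin.cons x b : BV (L + 1)) = Fin.cons x (psi j b) := by
  ext i
  cases i using Fin.cases <;> simp [psi, (Fin.succ_ne_zero j).symm]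

end Cons

/-- The bonds `(j, j + 1)` of the chain that can fire, i.e. those whose left site is occupied.
A bond is named after its left site, so the last site names no bond. -/
def activeBonds {L : ℕ} (b : BV L) : Finset (Fin L) :=
  Finset.univ.filter fun j ↦ (j : ℕ) + 1 < L ∧ b j = 1

theorem mem_activeBonds {L : ℕ} {b : BV L} {j : Fin L} :
    j ∈ activeBonds b ↔ (j : ℕ) + 1 < L ∧ b j = 1 := by
  simp [activeBonds]

theorem activeBonds_cons_zero {L : ℕ} (b : BV L) :
    activeBonds (Fin.cons 0 b : BV (L + 1)) = (activeBonds b).map (Fin.succEmb L) := by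
  ext j
  cases j using Fin.cases <;> simp [mem_activeBonds]

theorem activeBonds_cons_one {L : ℕ} (b : BV (L + 1)) :
    activeBonds (Fin.cons 1 b : BV (L + 2)) =
      Finset.cons 0 ((activeBonds b).map (Fin.succEmb (L + 1))) (by simp) := by
  ext j
  cases j using Fin.cases <;> simp [mem_activeBonds]

theorem exists_mem_activeBonds_cons_zero {L : ℕ} (y : ZMod 2) (c b : BV L) :
    (∃ j ∈ activeBonds (Fin.cons 0 b : BV (L + 1)),
        (Fin.cons y c : BV (L + 1)) = psi j (Fin.cons 0 b)) ↔
      y = 0 ∧ ∃ j ∈ activeBonds b, c = psi j b := by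
  simp only [activeBonds_cons_zero, Finset.mem_map, exists_exists_and_eq_and, Fin.coe_succEmb,
    psi_succ_cons, Fin.cons_inj, and_left_comm (b := y = 0), exists_and_left]

theorem exists_mem_activeBonds_cons_one {L : ℕ} (y : ZMod 2) (c b : BV (L + 1)) :
    (∃ j ∈ activeBonds (Fin.cons 1 b : BV (L + 2)),
        (Fin.cons y c : BV (L + 2)) = psi j (Fin.cons 1 b)) ↔
      (y = 0 ∧ c = phi 0 b) ∨ (y = 1 ∧ ∃ j ∈ activeBonds b, c = psi j b) := by
  simp [activeBonds_cons_one, psi_zero_cons, psi_succ_cons, CharTwo.add_self_eq_zero,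
    and_left_comm (b := y = 1)]

theorem Mmat_zero_apply (L : ℕ) (β : ℝ) (c b : BV (L + 1)) :
    Mmat L 0 β c b =
      if c = b then -((activeBonds b).card + β * if b (Fin.last L) = 1 then 1 else 0)
      else (if ∃ j ∈ activeBonds b, c = psi j b then 1 else 0) +
        if b (Fin.last L) = 1 ∧ c = phi (Fin.last L) b then β else 0 := by
  simp [Mmat, activeBonds, and_assoc]

theorem Mmat_eq_Mmat_zero_add (L : ℕ) (α β : ℝ) :
    Mmat L α β = Mmat L 0 β + α • (SK L - 1) := by
  ext c b
  simp only [Mmat, SK, Matrix.of_apply, Matrix.add_apply, Matrix.smul_apply, Matrix.sub_apply,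
    Matrix.one_apply, smul_eq_mul, ite_self]
  rcases eq_or_ne c b with rfl | hcb
  · simp only [if_true, if_neg (phi_ne_self 0 c).symm]
    ring
  · simp only [if_neg hcb, sub_zero, mul_boole]
    ring

theorem reindex_splitEquiv_eq_fromBlocks_iff {R : Type*} {L : ℕ}
    {A : Matrix (BV (L + 1)) (BV (L + 1)) R} {B₀₀ B₀₁ B₁₀ B₁₁ : Matrix (BV L) (BV L) R} :
    Matrix.reindex (splitEquiv L) (splitEquiv L) A = Matrix.fromBlocks B₀₀ B₀₁ B₁₀ B₁₁ ↔
      (∀ c b, A (Fin.cons 0 c) (Fin.cons 0 b) = B₀₀ c b) ∧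
      (∀ c b, A (Fin.cons 0 c) (Fin.cons 1 b) = B₀₁ c b) ∧
      (∀ c b, A (Fin.cons 1 c) (Fin.cons 0 b) = B₁₀ c b) ∧
      ∀ c b, A (Fin.cons 1 c) (Fin.cons 1 b) = B₁₁ c b := by
  rw [Matrix.ext_iff_blocks]
  simp only [← Matrix.ext_iff]
  rfl

theorem reindex_SK_sub_one (L : ℕ) :
    Matrix.reindex (splitEquiv L) (splitEquiv L) (SK L - 1) =
      Matrix.fromBlocks (-1) 1 1 (-1) := by
  rw [reindex_splitEquiv_eq_fromBlocks_iff]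
  refine ⟨?_, ?_, ?_, ?_⟩ <;> intro c b <;>
    simp [SK, phi_zero_cons, Matrix.one_apply, CharTwo.add_self_eq_zero]

theorem reindex_Mmat_zero (L : ℕ) (β : ℝ) :
    Matrix.reindex (splitEquiv (L + 1)) (splitEquiv (L + 1)) (Mmat (L + 1) 0 β) =
      Matrix.fromBlocks (Mmat L 0 β) (SK L) 0 (Mmat L 0 β - 1) := by
  rw [reindex_splitEquiv_eq_fromBlocks_iff]
  refine ⟨?_, ?_, ?_, ?_⟩ <;> intro c b <;>
    simp only [Mmat_zero_apply, exists_mem_activeBonds_cons_zero,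
      exists_mem_activeBonds_cons_one, ← Fin.succ_last, Fin.cons_succ, phi_succ_cons, Fin.cons_inj]
  · simp [activeBonds_cons_zero]
  · simp [SK]
  · simp
  · rcases eq_or_ne c b with rfl | hcb
    · simp only [activeBonds_cons_one, Finset.card_cons, Finset.card_map, Nat.cast_succ,
        Mmat_zero_apply, Matrix.sub_apply, Matrix.one_apply_eq, and_self, if_true]
      ring
    · simp [hcb, Mmat_zero_apply]

/-- For every `L ≥ 2` (here `L = n+2`), the transition matrix `M_L`
satisfies the order-one block recursion
`M_L = [[M_{L-1} − α(σ⊗1), α·1 + σ⊗1], [α·1, M_{L-1} − 1 − α(σ⊗1)]]`,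
where the `2×2` block structure corresponds to the first (most significant) bit. -/
theorem statement0 (α β : ℝ) (n : ℕ) :
    Mmat (n+1) α β =
      (Matrix.reindex (splitEquiv (n+1)).symm (splitEquiv (n+1)).symm)
        (Matrix.fromBlocks
          (Mmat n α β - α • SK n)
          (α • (1 : Matrix (BV (n+1)) (BV (n+1)) ℝ) + SK n)
          (α • (1 : Matrix (BV (n+1)) (BV (n+1)) ℝ))
          (Mmat n α β - 1 - α • SK n)) := by
  rw [← Matrix.reindex_symm, Equiv.eq_symm_apply]
  let e := splitEquiv (n + 1)
  calc
    Matrix.reindex e e (Mmat (n + 1) α β)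
      = Matrix.reindex e e (Mmat (n + 1) 0 β) + α • Matrix.reindex e e (SK (n + 1) - 1) := by
        rw [Mmat_eq_Mmat_zero_add]
        rfl
    _ = Matrix.fromBlocks (Mmat n 0 β) (SK n) 0 (Mmat n 0 β - 1) +
          α • Matrix.fromBlocks (-1) 1 1 (-1) := by
        rw [reindex_Mmat_zero, reindex_SK_sub_one]
    _ = _ := by
        rw [Matrix.fromBlocks_smul, Matrix.fromBlocks_add, Mmat_eq_Mmat_zero_add n α]
        congr 1 <;> module
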